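/- arXiv:cs/0401010 — 7 statements merged into one kernel-verified Lean document; each statement's English description precedes it below -/
import Mathlib

section
/- Fix a positive integer N ≥ 1 and per-unit costs m ≥ 0, a ≥ 0, r ≥ 0, s ≥ 0 with at least one of m, a, r nonzero. If C0(N) = Ci(N), then N = 2, or else: if m = 0 and r ≠ a then N = r/(r−a), and if m ≠ 0 then N = (a−r)/(2m) + √(((a−r)/(2m))² + r/m). In particular, if m = 0 and r = a then C0(N) = Ci(N) forces N = 2. -/
/-- **Star network cost symmetry, fixed `N`.**
In a star network on `N ≥ 1` nodes with center cost
`C0(N) = m(N-1) + s/N + a(N-1)/N + r(N-1)(N-2)/N^2` and peripheral cost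
`Ci(N) = m + (s + a(2N-3))/N`, with nonnegative per-unit costs at least one of
`m`, `a`, `r` nonzero: if `C0(N) = Ci(N)` then either `N = 2`, or else
(if `m = 0` then necessarily `r ≠ a` and `N = r/(r-a)`, and if `m ≠ 0` then
`N = (a-r)/(2m) + √(((a-r)/(2m))² + r/m)`).  In particular, when `m = 0` and
`r = a`, the equality `C0(N) = Ci(N)` forces `N = 2`. -/
theorem star_cost_equal_fixed_N (m a r s : ℝ) (N : ℕ) (hN : 1 ≤ N)
    (hm : 0 ≤ m) (ha : 0 ≤ a) (hr : 0 ≤ r) (hs : 0 ≤ s)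
    (hnz : m ≠ 0 ∨ a ≠ 0 ∨ r ≠ 0)
    (heq : m * ((N : ℝ) - 1) + s / (N : ℝ) + a * ((N : ℝ) - 1) / (N : ℝ)
          + r * ((N : ℝ) - 1) * ((N : ℝ) - 2) / (N : ℝ) ^ 2
        = m + (s + a * (2 * (N : ℝ) - 3)) / (N : ℝ)) :
    N = 2 ∨
      ((m = 0 → r ≠ a ∧ (N : ℝ) = r / (r - a)) ∧
       (m ≠ 0 → (N : ℝ) = (a - r) / (2 * m)
          + Real.sqrt (((a - r) / (2 * m)) ^ 2 + r / m))) := by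
  by_cases h2 : N = 2
  · exact Or.inl h2
  right
  have hx : (0 : ℝ) < N := by exact_mod_cast hN
  have hx2 : (N : ℝ) - 2 ≠ 0 := by
    intro h
    apply h2
    have : (N : ℝ) = 2 := by linarith
    exact_mod_cast this
  generalize (N : ℝ) = x at *
  have hx0 : x ≠ 0 := hx.ne'
  have key : m * x ^ 2 - (a - r) * x - r = 0 := by
    apply mul_left_cancel₀ hx2
    field_simp at heq
    linarith
  refine ⟨fun h0 => ?_, fun h0 => ?_⟩
  · subst h0
    have hra : r ≠ a := by
      intro h
      subst h
      have : r = 0 := by linarith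
      simp [this] at hnz
    refine ⟨hra, ?_⟩
    rw [eq_div_iff (sub_ne_zero.mpr hra)]
    linarith
  · have hmp : 0 < m := lt_of_le_of_ne hm (Ne.symm h0)
    have hsq : ((a - r) / (2 * m)) ^ 2 + r / m = (x - (a - r) / (2 * m)) ^ 2 := by
      field_simp
      linear_combination (-4 * m) * key
    have hnn : 0 ≤ x - (a - r) / (2 * m) := by
      rw [sub_nonneg, div_le_iff₀ (by positivity)]
      have : 0 ≤ m * x ^ 2 := by positivity
      have h3 : (a - r) * x ≤ (x * (2 * m)) * x := by nlinarith
      exact le_of_mul_le_mul_right h3 hx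
    rw [hsq, Real.sqrt_sq hnn]
    ring
end

section
/- In the de Bruijn digraph B(Δ, D), let c be a constant string (c_p = h for all positions p, for some fixed symbol h). Then under shortest-path routing, c never lies in the interior of a shortest directed path: for all vertices j ≠ c and l ≠ c from which and to which c is reachable, dist(j, l) < dist(j, c) + dist(c, l). Equivalently, no shortest directed path from j to l contains c as a vertex other than its endpoints. -/
/-- Adjacency in the de Bruijn digraph `B(Δ, D)`: there is an edge
`u → v` iff the first `D−1` symbols of `v` equal the last `D−1` symbols
of `u`. -/
def deBruijnAdj {Δ D : ℕ} (u v : Fin D → Fin Δ) : Prop :=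
  ∀ (k : ℕ) (h : k + 1 < D), v ⟨k, Nat.lt_of_succ_lt h⟩ = u ⟨k + 1, h⟩

/-- `f` is a directed walk of length `n` in the de Bruijn digraph. -/
def deBruijnWalk {Δ D : ℕ} (n : ℕ) (f : ℕ → Fin D → Fin Δ) : Prop :=
  ∀ k < n, deBruijnAdj (f k) (f (k + 1))

/-- `y` is reachable from `x` by a directed walk in the de Bruijn digraph. -/
def deBruijnReachable {Δ D : ℕ} (x y : Fin D → Fin Δ) : Prop :=
  ∃ (n : ℕ) (f : ℕ → Fin D → Fin Δ), f 0 = x ∧ f n = y ∧ deBruijnWalk n f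

/-- Directed graph distance in the de Bruijn digraph: the length of a
shortest directed walk from `x` to `y`. -/
noncomputable def deBruijnDist {Δ D : ℕ} (x y : Fin D → Fin Δ) : ℕ :=
  sInf {n : ℕ | ∃ f : ℕ → Fin D → Fin Δ, f 0 = x ∧ f n = y ∧ deBruijnWalk n f}

theorem walk_shift {Δ D : ℕ} (n : ℕ) (f : ℕ → Fin D → Fin Δ) (hf : deBruijnWalk n f) :
    ∀ (k : ℕ) (hk : k + n < D), f n ⟨k, by omega⟩ = f 0 ⟨k + n, hk⟩ := by
  induction n with
  | zero => intro k hk; rfl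
  | succ n ih =>
    intro k hk
    have h1 := hf n (by omega) k (by omega)
    have h2 := ih (fun t ht => hf t (by omega)) (k + 1) (by omega)
    rw [h1, h2]
    congr 2
    omega

theorem exists_walk {Δ D : ℕ} (hΔ : 0 < Δ) (n : ℕ) (x y : Fin D → Fin Δ)
    (hxy : ∀ (k : ℕ) (hk : k + n < D), y ⟨k, by omega⟩ = x ⟨k + n, hk⟩) :
    ∃ f : ℕ → Fin D → Fin Δ, f 0 = x ∧ f n = y ∧ deBruijnWalk n f := by
  let g : ℕ → Fin Δ := fun m =>
    if h1 : m < D then x ⟨m, h1⟩ else if h2 : m - n < D then y ⟨m - n, h2⟩ else ⟨0, hΔ⟩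
  refine ⟨fun t k => g (k.1 + t), ?_, ?_, ?_⟩
  · funext k
    simp [g]
  · funext k
    by_cases hk : k.1 + n < D
    · simp only [g, dif_pos hk]
      exact (hxy k.1 hk).symm
    · simp [g, hk]
  · intro t _ k hk
    change g (k + (t + 1)) = g (k + 1 + t)
    congr 1
    omega

/-- **Constant nodes of a de Bruijn graph route no traffic.**
In `B(Δ, D)` with `Δ ≥ 2`, `D ≥ 1`, let `c` be a constant string
(`c p = h` for all `p`).  Then for all vertices `j ≠ c` and `l ≠ c` such that
`c` is reachable from `j` and `l` is reachable from `c`, we have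
`dist(j, l) < dist(j, c) + dist(c, l)`: no shortest directed path from `j`
to `l` passes through `c` as an interior vertex. -/
theorem deBruijn_constant_not_interior (Δ D : ℕ) (hΔ : 2 ≤ Δ) (hD : 1 ≤ D)
    (h : Fin Δ) (c : Fin D → Fin Δ) (hc : ∀ p, c p = h)
    (j l : Fin D → Fin Δ) (hj : j ≠ c) (hl : l ≠ c)
    (hjc : deBruijnReachable j c) (hcl : deBruijnReachable c l) :
    deBruijnDist j l < deBruijnDist j c + deBruijnDist c l := by
  have ha : deBruijnDist j c ∈ {n : ℕ | ∃ f : ℕ → Fin D → Fin Δ,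
      f 0 = j ∧ f n = c ∧ deBruijnWalk n f} := Nat.sInf_mem hjc
  have hb : deBruijnDist c l ∈ {n : ℕ | ∃ f : ℕ → Fin D → Fin Δ,
      f 0 = c ∧ f n = l ∧ deBruijnWalk n f} := Nat.sInf_mem hcl
  generalize deBruijnDist j c = a at *
  generalize deBruijnDist c l = b at *
  obtain ⟨f, f0, fa, hf⟩ := ha
  obtain ⟨g, g0, gb, hg⟩ := hb
  have a0 : a ≠ 0 := by
    rintro rfl
    exact hj (f0.symm.trans fa)
  have b0 : b ≠ 0 := by
    rintro rfl
    exact hl (gb.symm.trans g0)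
  have hle : deBruijnDist j l ≤ a + b - 1 := by
    apply Nat.sInf_le
    apply exists_walk (by omega)
    intro k hk
    have h1 := walk_shift b g hg k (by omega)
    have h2 := walk_shift a f hf (k + (b - 1)) (by omega)
    rw [g0, gb, hc] at h1
    rw [f0, fa, hc] at h2
    rw [h1, h2]
    congr 2
    omega
  omega
end

section
/- In the de Bruijn digraph B(Δ, D), for any vertex i, the number of ordered pairs (j, l) of vertices with j ≠ i and l ≠ i such that i lies on some shortest directed path from j to l as an interior vertex (equivalently, dist(j, i) + dist(i, l) = dist(j, l) with both distances at least 1) is at most L_max, where L_max = ((D−1)(Δ^{D+2} − (Δ−1)²) − D·Δ^{D+1} + Δ²) / (Δ−1)². -/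
namespace DBAux

def P {Δ D : ℕ} (n : ℕ) (x y : Fin D → Fin Δ) : Prop :=
  ∀ (k : ℕ) (h : k + n < D), y ⟨k, by omega⟩ = x ⟨k + n, h⟩

lemma P_of_walk {Δ D : ℕ} (n : ℕ) (f : ℕ → Fin D → Fin Δ) (hf : deBruijnWalk n f) :
    P n (f 0) (f n) := by
  induction n with
  | zero => intro k h; rfl
  | succ n ih =>
    intro k h
    have h1 := ih (fun k hk => hf k (by omega)) (k + 1) (by omega)
    have h2 := hf n (by omega) k (by omega)
    rw [h2, h1]
    congr 2
    omega

lemma walk_D {Δ D : ℕ} (x y : Fin D → Fin Δ) :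
    D ∈ {n : ℕ | ∃ f : ℕ → Fin D → Fin Δ, f 0 = x ∧ f n = y ∧ deBruijnWalk n f} := by
  refine ⟨fun n k => if h : k.1 + n < D then x ⟨k.1 + n, h⟩ else
    y ⟨(k.1 + n - D) % D, Nat.mod_lt _ (by have := k.2; omega)⟩, ?_, ?_, ?_⟩
  · funext k
    simp
  · funext k
    simp [Nat.mod_eq_of_lt k.2]
  · intro n hn k h
    have e : k + (n + 1) = k + 1 + n := by omega
    simp only [e]

lemma dist_le {Δ D : ℕ} (x y : Fin D → Fin Δ) : deBruijnDist x y ≤ D :=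
  Nat.sInf_le (walk_D x y)

lemma dist_P {Δ D : ℕ} (x y : Fin D → Fin Δ) : P (deBruijnDist x y) x y := by
  obtain ⟨f, h0, h1, hw⟩ := Nat.sInf_mem ⟨D, walk_D x y⟩
  have := P_of_walk _ f hw
  rw [h0, h1] at this
  exact this

lemma dist_self {Δ D : ℕ} (x : Fin D → Fin Δ) : deBruijnDist x x = 0 := by
  have : deBruijnDist x x ≤ 0 := Nat.sInf_le ⟨fun _ => x, rfl, rfl, fun k hk => by omega⟩
  omega

open Classical in
noncomputable def A {Δ D : ℕ} (i : Fin D → Fin Δ) (a : ℕ) : Finset (Fin D → Fin Δ) :=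
  Finset.univ.filter fun j => P a j i

open Classical in
noncomputable def B {Δ D : ℕ} (i : Fin D → Fin Δ) (b : ℕ) : Finset (Fin D → Fin Δ) :=
  Finset.univ.filter fun l => P b i l

open Classical in
noncomputable def T {Δ D : ℕ} (i : Fin D → Fin Δ) (a b : ℕ) :
    Finset ((Fin D → Fin Δ) × (Fin D → Fin Δ)) :=
  (A i a ×ˢ B i b).filter fun p => p.1 ≠ p.2

lemma card_A {Δ D : ℕ} (i : Fin D → Fin Δ) (a : ℕ) (ha : a ≤ D) : (A i a).card ≤ Δ ^ a := by
  have : (A i a).card ≤ (Finset.univ : Finset (Fin a → Fin Δ)).card := by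
    apply Finset.card_le_card_of_injOn (fun j k => j ⟨k.1, by omega⟩)
    · intro x _; simp
    · intro x hx y hy hxy
      simp only [A, Finset.coe_filter, Finset.mem_univ, true_and, Set.mem_ofPred_eq] at hx hy
      funext k
      by_cases hk : k.1 < a
      · exact congrFun hxy ⟨k.1, hk⟩
      · have h1 := hx (k.1 - a) (by omega)
        have h2 := hy (k.1 - a) (by omega)
        rw [h1] at h2
        have e : k.1 - a + a = k.1 := by omega
        simpa only [e] using h2
  simpa using this

lemma card_B {Δ D : ℕ} (i : Fin D → Fin Δ) (a : ℕ) (ha : a ≤ D) : (B i a).card ≤ Δ ^ a := by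
  have : (B i a).card ≤ (Finset.univ : Finset (Fin a → Fin Δ)).card := by
    apply Finset.card_le_card_of_injOn (fun j k => j ⟨k.1 + (D - a), by omega⟩)
    · intro x _; simp
    · intro x hx y hy hxy
      simp only [B, Finset.coe_filter, Finset.mem_univ, true_and, Set.mem_ofPred_eq] at hx hy
      funext k
      by_cases hk : k.1 + a < D
      · have h1 := hx k.1 hk
        have h2 := hy k.1 hk
        exact h1.trans h2.symm
      · have h := congrFun hxy ⟨k.1 - (D - a), by omega⟩
        have e : k.1 - (D - a) + (D - a) = k.1 := by omega
        simpa only [e] using h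
  simpa using this

lemma card_AB {Δ D : ℕ} (i : Fin D → Fin Δ) (a b : ℕ) (h : a + b ≤ D) :
    (A i a ×ˢ B i b).card ≤ Δ ^ (a + b) := by
  rw [Finset.card_product, pow_add]
  exact Nat.mul_le_mul (card_A i a (by omega)) (card_B i b (by omega))

lemma card_T_le {Δ D : ℕ} (i : Fin D → Fin Δ) (a b : ℕ) (h : a + b ≤ D) :
    (T i a b).card ≤ Δ ^ (a + b) :=
  (Finset.card_filter_le _ _).trans (card_AB i a b h)

lemma card_T_lt {Δ D : ℕ} (i : Fin D → Fin Δ) (a b : ℕ) (h : a + b = D) :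
    (T i a b).card < Δ ^ (a + b) := by
  classical
  refine lt_of_lt_of_le (Finset.card_lt_card ?_) (card_AB i a b h.le)
  unfold T
  rw [Finset.filter_ssubset]
  let r : Fin D → Fin Δ := fun k => if hk : k.1 < a then i ⟨k.1 + b, by omega⟩
    else i ⟨k.1 - a, by omega⟩
  refine ⟨(r, r), ?_, by simp⟩
  simp only [A, B, Finset.mem_product, Finset.mem_filter, Finset.mem_univ, true_and]
  constructor
  · intro k hk
    simp [r]
  · intro k hk
    have : k < a := by omega
    simp [r, this]

lemma closed (x : ℝ) (hx : x - 1 ≠ 0) (E : ℕ) :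
    ∑ a ∈ Finset.range E, ∑ b ∈ Finset.range (E - a), x ^ (a + 1 + (b + 1))
     = ((E : ℝ) * x ^ (E + 3) - (E + 1) * x ^ (E + 2) + x ^ 2) / (x - 1) ^ 2 := by
  induction E with
  | zero => simp
  | succ E ih =>
    have : ∑ a ∈ Finset.range (E + 1), ∑ b ∈ Finset.range (E + 1 - a), x ^ (a + 1 + (b + 1))
      = ∑ a ∈ Finset.range (E + 1), (∑ b ∈ Finset.range (E - a), x ^ (a + 1 + (b + 1))
          + x ^ (E + 2)) := by
      apply Finset.sum_congr rfl
      intro a ha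
      rw [Finset.mem_range] at ha
      have e : E + 1 - a = E - a + 1 := by omega
      rw [e, Finset.sum_range_succ]
      congr 2
      omega
    rw [this, Finset.sum_add_distrib, Finset.sum_range_succ, ih]
    simp only [Nat.sub_self, Finset.range_zero, Finset.sum_empty, Finset.sum_const,
      Finset.card_range, nsmul_eq_mul]
    push_cast
    field_simp
    ring

lemma main_nat {Δ E : ℕ} (i : Fin (E + 1) → Fin Δ) :
    Nat.card {p : (Fin (E + 1) → Fin Δ) × (Fin (E + 1) → Fin Δ) //
        p.1 ≠ i ∧ p.2 ≠ i ∧ 1 ≤ deBruijnDist p.1 i ∧ 1 ≤ deBruijnDist i p.2 ∧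
        deBruijnDist p.1 i + deBruijnDist i p.2 = deBruijnDist p.1 p.2} + E
      ≤ ∑ a ∈ Finset.range E, ∑ b ∈ Finset.range (E - a), Δ ^ (a + 1 + (b + 1)) := by
  classical
  rw [Nat.card_eq_fintype_card, Fintype.card_subtype]
  have hsub : (Finset.univ.filter fun p : (Fin (E + 1) → Fin Δ) × (Fin (E + 1) → Fin Δ) =>
        p.1 ≠ i ∧ p.2 ≠ i ∧ 1 ≤ deBruijnDist p.1 i ∧ 1 ≤ deBruijnDist i p.2 ∧
        deBruijnDist p.1 i + deBruijnDist i p.2 = deBruijnDist p.1 p.2) ⊆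
      (Finset.range E).biUnion fun a => (Finset.range (E - a)).biUnion fun b =>
        T i (a + 1) (b + 1) := by
    rintro ⟨j, l⟩ hp
    simp only [Finset.mem_filter, Finset.mem_univ, true_and] at hp
    obtain ⟨-, -, h1, h2, h3⟩ := hp
    have hD := dist_le j l
    simp only [Finset.mem_biUnion, Finset.mem_range]
    refine ⟨deBruijnDist j i - 1, by omega, deBruijnDist i l - 1, by omega, ?_⟩
    rw [Nat.sub_add_cancel h1, Nat.sub_add_cancel h2]
    simp only [T, A, B, Finset.mem_product, Finset.mem_filter, Finset.mem_univ, true_and]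
    refine ⟨⟨dist_P _ _, dist_P _ _⟩, ?_⟩
    rintro rfl
    rw [dist_self] at h3
    omega
  have h1 := (Finset.card_le_card hsub).trans Finset.card_biUnion_le
  calc _ ≤ (∑ a ∈ Finset.range E, ((Finset.range (E - a)).biUnion fun b =>
        T i (a + 1) (b + 1)).card) + E := Nat.add_le_add_right h1 E
    _ = ∑ a ∈ Finset.range E, (((Finset.range (E - a)).biUnion fun b =>
        T i (a + 1) (b + 1)).card + 1) := by simp [Finset.sum_add_distrib]
    _ ≤ _ := by
      apply Finset.sum_le_sum
      intro a ha
      rw [Finset.mem_range] at ha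
      refine Nat.succ_le_of_lt (lt_of_le_of_lt Finset.card_biUnion_le ?_)
      apply Finset.sum_lt_sum
      · intro b hb
        rw [Finset.mem_range] at hb
        exact card_T_le i _ _ (by omega)
      · exact ⟨E - a - 1, by rw [Finset.mem_range]; omega, card_T_lt i _ _ (by omega)⟩

end DBAux

/-- **Upper bound on the routing load of a de Bruijn node.**
In `B(Δ, D)` with `Δ ≥ 2`, `D ≥ 1`, for any vertex `i`, the number of ordered
pairs `(j, l)` with `j ≠ i`, `l ≠ i` such that `i` is an interior vertex of
some shortest directed path from `j` to `l` (i.e.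
`dist(j, i) + dist(i, l) = dist(j, l)` with both distances at least `1`) is at
most `L_max = ((D−1)(Δ^{D+2} − (Δ−1)²) − D·Δ^{D+1} + Δ²) / (Δ−1)²`. -/
theorem deBruijn_routing_load_upper_bound (Δ D : ℕ) (hΔ : 2 ≤ Δ) (hD : 1 ≤ D)
    (i : Fin D → Fin Δ) :
    (Nat.card {p : (Fin D → Fin Δ) × (Fin D → Fin Δ) //
        p.1 ≠ i ∧ p.2 ≠ i ∧ 1 ≤ deBruijnDist p.1 i ∧ 1 ≤ deBruijnDist i p.2 ∧
        deBruijnDist p.1 i + deBruijnDist i p.2 = deBruijnDist p.1 p.2} : ℝ)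
      ≤ (((D : ℝ) - 1) * ((Δ : ℝ) ^ (D + 2) - ((Δ : ℝ) - 1) ^ 2)
          - (D : ℝ) * (Δ : ℝ) ^ (D + 1) + (Δ : ℝ) ^ 2) / ((Δ : ℝ) - 1) ^ 2 := by
  obtain ⟨E, rfl⟩ : ∃ E, D = E + 1 := ⟨D - 1, by omega⟩
  have h := DBAux.main_nat i
  have hx : (Δ : ℝ) - 1 ≠ 0 := by
    have : (2 : ℝ) ≤ Δ := by exact_mod_cast hΔ
    intro h0
    linarith
  have h' := (Nat.cast_le (α := ℝ)).2 h
  rw [Nat.cast_add] at h'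
  push_cast at h'
  rw [DBAux.closed _ hx] at h'
  have e : (((E + 1 : ℕ) : ℝ) - 1) * ((Δ : ℝ) ^ (E + 1 + 2) - ((Δ : ℝ) - 1) ^ 2)
          - ((E + 1 : ℕ) : ℝ) * (Δ : ℝ) ^ (E + 1 + 1) + (Δ : ℝ) ^ 2
      = ((E : ℝ) * (Δ : ℝ) ^ (E + 3) - (E + 1) * (Δ : ℝ) ^ (E + 2) + (Δ : ℝ) ^ 2)
        - E * ((Δ : ℝ) - 1) ^ 2 := by
    push_cast
    ring
  rw [e, sub_div, mul_div_cancel_right₀ _ (pow_ne_zero 2 hx)]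
  linarith
end

section
/- Let G be a directed graph on a vertex set of cardinality N = Δ^D (integers Δ ≥ 2, D ≥ 1) in which every vertex has out-degree at most Δ, and let i be a vertex from which every vertex of G is reachable. Then the sum over all vertices j of the directed distance dist(i, j) is at least D·Δ^D + D/(Δ−1) − Δ(Δ^D − 1)/(Δ−1)²; equivalently, (Δ−1)² · Σ_j dist(i, j) ≥ (Δ−1)²·D·Δ^D + D·(Δ−1) − Δ·(Δ^D − 1). -/
/-- `f` is a directed walk of length `n` for the relation `adj`. -/
def relWalk {V : Type*} (adj : V → V → Prop) (n : ℕ) (f : ℕ → V) : Prop :=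
  ∀ k < n, adj (f k) (f (k + 1))

/-- Directed graph distance for the relation `adj`: the length of a shortest
directed walk from `x` to `y` (`0` from a vertex to itself). -/
noncomputable def relDist {V : Type*} (adj : V → V → Prop) (x y : V) : ℕ :=
  sInf {n : ℕ | ∃ f : ℕ → V, f 0 = x ∧ f n = y ∧ relWalk adj n f}

open Classical in
noncomputable def layerS {V : Type*} [Fintype V] (adj : V → V → Prop) (i : V) : ℕ → Finset V
  | 0 => {i}
  | k + 1 => (layerS adj i k).biUnion (fun v => Finset.univ.filter (fun w => adj v w))

lemma card_layerS {V : Type*} [Fintype V] (adj : V → V → Prop) (Δ : ℕ)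
    (hdeg : ∀ v : V, Nat.card {w : V // adj v w} ≤ Δ) (i : V) (k : ℕ) :
    (layerS adj i k).card ≤ Δ ^ k := by
  classical
  induction k with
  | zero => simp [layerS]
  | succ k ih =>
    rw [layerS, pow_succ]
    refine (Finset.card_biUnion_le_card_mul _ _ Δ ?_).trans (Nat.mul_le_mul_right _ ih)
    intro v _
    have h := hdeg v
    rw [Nat.card_eq_fintype_card, Fintype.card_subtype] at h
    convert h

lemma walk_mem_layerS {V : Type*} [Fintype V] (adj : V → V → Prop) (n : ℕ) (f : ℕ → V)
    (hf : relWalk adj n f) : ∀ k ≤ n, f k ∈ layerS adj (f 0) k := by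
  classical
  intro k
  induction k with
  | zero => simp [layerS]
  | succ k ih =>
    intro hk
    rw [layerS, Finset.mem_biUnion]
    exact ⟨f k, ih (by omega), by simpa using hf k (by omega)⟩

lemma exists_walk_s10 {V : Type*} (adj : V → V → Prop) (i j : V)
    (h : Relation.ReflTransGen adj i j) :
    ∃ n, ∃ f : ℕ → V, f 0 = i ∧ f n = j ∧ relWalk adj n f := by
  induction h with
  | refl => exact ⟨0, fun _ => i, rfl, rfl, fun k hk => absurd hk (by omega)⟩
  | @tail b c _ hbc ih =>
    obtain ⟨n, f, h0, hn, hw⟩ := ih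
    refine ⟨n + 1, fun k => if k ≤ n then f k else c, by simpa using h0, by simp, ?_⟩
    intro k hk
    rcases Nat.lt_or_ge k n with h | h
    · have h1 : k ≤ n := by omega
      have h2 : k + 1 ≤ n := by omega
      simpa [h1, h2] using hw k h
    · have h1 : k = n := by omega
      subst h1
      simpa [hn] using hbc

lemma mem_layerS_dist {V : Type*} [Fintype V] (adj : V → V → Prop) (i j : V)
    (h : Relation.ReflTransGen adj i j) : j ∈ layerS adj i (relDist adj i j) := by
  obtain ⟨f, h0, hn, hw⟩ := Nat.sInf_mem (s := {n : ℕ | ∃ f : ℕ → V, f 0 = i ∧ f n = j ∧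
    relWalk adj n f}) (exists_walk_s10 adj i j h)
  have := walk_mem_layerS adj _ f hw _ le_rfl
  rw [h0, hn] at this
  exact this

lemma closed_form (d : ℤ) (N : ℤ) (D : ℕ) :
    (d - 1) ^ 2 * ∑ k ∈ Finset.range D, (N - ∑ m ∈ Finset.range (k + 1), d ^ m)
      = (d - 1) ^ 2 * (D : ℤ) * N + (D : ℤ) * (d - 1) - d * (d ^ D - 1) := by
  induction D with
  | zero => simp
  | succ D ih =>
    rw [Finset.sum_range_succ, mul_add, ih]
    have h := geom_sum_mul d (D + 1)
    push_cast
    linear_combination (-(d - 1)) * h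

/-- **Lower bound on the sum of distances in a bounded out-degree digraph.**
Let `G` be a digraph on `N = Δ^D` vertices (`Δ ≥ 2`, `D ≥ 1`) in which every
vertex has out-degree at most `Δ`, and let `i` be a vertex from which every
vertex is reachable.  Then
`(Δ−1)² · Σ_j dist(i, j) ≥ (Δ−1)²·D·Δ^D + D·(Δ−1) − Δ·(Δ^D − 1)`,
i.e. `Σ_j dist(i, j) ≥ D·Δ^D + D/(Δ−1) − Δ(Δ^D − 1)/(Δ−1)²`. -/
theorem sum_dist_lower_bound {V : Type*} [Fintype V] (adj : V → V → Prop)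
    (Δ D : ℕ) (hΔ : 2 ≤ Δ) (hD : 1 ≤ D) (hcard : Fintype.card V = Δ ^ D)
    (hdeg : ∀ v : V, Nat.card {w : V // adj v w} ≤ Δ)
    (i : V) (hreach : ∀ j : V, Relation.ReflTransGen adj i j) :
    ((Δ : ℤ) - 1) ^ 2 * ∑ j : V, (relDist adj i j : ℤ)
      ≥ ((Δ : ℤ) - 1) ^ 2 * (D : ℤ) * (Δ : ℤ) ^ D + (D : ℤ) * ((Δ : ℤ) - 1)
        - (Δ : ℤ) * ((Δ : ℤ) ^ D - 1) := by
  classical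
  rw [← closed_form, ge_iff_le]
  refine mul_le_mul_of_nonneg_left ?_ (sq_nonneg _)
  have h1 : ∀ j : V, ∑ k ∈ Finset.range D, (if k < relDist adj i j then (1 : ℤ) else 0)
      ≤ (relDist adj i j : ℤ) := by
    intro j
    rw [Finset.sum_boole]
    have : ((Finset.range D).filter (fun k => k < relDist adj i j)).card
        ≤ (Finset.range (relDist adj i j)).card :=
      Finset.card_le_card (fun k hk => by simpa using (Finset.mem_filter.mp hk).2)
    rw [Finset.card_range] at this
    exact_mod_cast this
  refine le_trans ?_ (Finset.sum_le_sum (fun j _ => h1 j))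
  rw [Finset.sum_comm]
  refine Finset.sum_le_sum (fun k _ => ?_)
  rw [Finset.sum_boole]
  have h2 : (Finset.univ.filter (fun j => ¬ k < relDist adj i j)).card
      ≤ ∑ m ∈ Finset.range (k + 1), Δ ^ m := by
    calc _ ≤ ((Finset.range (k + 1)).biUnion (layerS adj i)).card := by
          refine Finset.card_le_card (fun j hj => ?_)
          have hj2 := (Finset.mem_filter.mp hj).2
          exact Finset.mem_biUnion.mpr ⟨relDist adj i j, by rw [Finset.mem_range]; omega,
            mem_layerS_dist adj i j (hreach j)⟩
      _ ≤ ∑ m ∈ Finset.range (k + 1), (layerS adj i m).card := Finset.card_biUnion_le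
      _ ≤ _ := Finset.sum_le_sum (fun m _ => card_layerS adj Δ hdeg i m)
  have h3 := Finset.card_filter_add_card_filter_not (s := (Finset.univ : Finset V))
    (fun j => k < relDist adj i j)
  rw [Finset.card_univ, hcard] at h3
  have h4 : Δ ^ D ≤ (Finset.univ.filter (fun j => k < relDist adj i j)).card
      + ∑ m ∈ Finset.range (k + 1), Δ ^ m := by
    rw [← h3]
    exact Nat.add_le_add_left h2 _
  rw [sub_le_iff_le_add]
  exact_mod_cast h4
end

section
/- Let N ≥ 3 be an odd integer, and consider the cycle (ring) on vertex set ZMod N in which j is adjacent to j+1 and j−1. Every ordered pair (j, l) of distinct vertices has a unique shortest path. For any fixed vertex i, the number of ordered pairs (j, l) with j ≠ l, j ≠ i, l ≠ i, such that i is an interior vertex of the unique shortest path from j to l, equals (N−1)(N−3)/4. -/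
/-- `f` is a walk of length `n` in the cycle on `ZMod N` (each step moves to
a neighbor `+1` or `−1`). -/
def cycleWalk (N : ℕ) (n : ℕ) (f : ℕ → ZMod N) : Prop :=
  ∀ k < n, f (k + 1) = f k + 1 ∨ f (k + 1) = f k - 1

/-- Graph distance in the cycle on `ZMod N`: the length of a shortest walk. -/
noncomputable def cycleDist (N : ℕ) (j l : ZMod N) : ℕ :=
  sInf {n : ℕ | ∃ f : ℕ → ZMod N, f 0 = j ∧ f n = l ∧ cycleWalk N n f}

lemma cw_lift (N n : ℕ) (f : ℕ → ZMod N) (h : cycleWalk N n f) :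
    ∃ s : ℕ → ℤ, s 0 = 0 ∧ (∀ t, s (t + 1) = s t + 1 ∨ s (t + 1) = s t - 1) ∧
      ∀ t ≤ n, f t = f 0 + (s t : ZMod N) := by
  classical
  refine ⟨fun t => ∑ k ∈ Finset.range t, (if f (k + 1) = f k + 1 then (1 : ℤ) else -1),
    by simp, ?_, ?_⟩
  · intro t
    simp only [Finset.sum_range_succ]
    split_ifs
    · left; ring
    · right; ring
  · intro t
    induction t with
    | zero => simp
    | succ t ih =>
      intro ht
      have h1 := ih (by omega)
      have h2 := h t (by omega)
      simp only [Finset.sum_range_succ]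
      split_ifs with h3
      · rw [h3, h1]; push_cast; ring
      · rw [h2.resolve_left h3, h1]; push_cast; ring

lemma lip (s : ℕ → ℤ) (h : ∀ t, s (t + 1) = s t + 1 ∨ s (t + 1) = s t - 1) (a k : ℕ) :
    (s (a + k) - s a).natAbs ≤ k := by
  induction k with
  | zero => simp
  | succ k ih =>
    have := h (a + k)
    rw [← add_assoc]
    omega

lemma cast_inj' (m : ℕ) (x y : ℤ) (hx : x.natAbs ≤ m) (hy : y.natAbs ≤ m)
    (h : (x : ZMod (2 * m + 1)) = y) : x = y := by
  rw [ZMod.intCast_eq_intCast_iff_dvd_sub] at h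
  have := Int.eq_zero_of_abs_lt_dvd h (by
    rw [abs_lt]; push_cast; omega)
  omega

lemma exists_rep (m : ℕ) (z : ZMod (2 * m + 1)) : ∃ v : ℤ, v.natAbs ≤ m ∧ (v : ZMod (2 * m + 1)) = z := by
  refine ⟨z.valMinAbs, ?_, by simp⟩
  have := ZMod.natAbs_valMinAbs_le z
  omega

lemma walk_mem (N : ℕ) (j : ZMod N) (v : ℤ) :
    ∃ f : ℕ → ZMod N, f 0 = j ∧ f v.natAbs = j + v ∧ cycleWalk N v.natAbs f ∧
      ∀ t, f t = j + ((v.sign * t : ℤ) : ZMod N) := by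
  refine ⟨fun t => j + ((v.sign * t : ℤ) : ZMod N), by simp, ?_, ?_, fun t => rfl⟩
  · simp only [Int.sign_mul_natAbs]
  · intro k hk
    rcases lt_trichotomy v 0 with h | h | h
    · right; simp [Int.sign_eq_neg_one_of_neg h]; ring
    · subst h; simp at hk
    · left; simp [Int.sign_eq_one_of_pos h]; ring

lemma lift_le (m n : ℕ) (j : ZMod (2 * m + 1)) (v : ℤ) (hv : v.natAbs ≤ m) (f : ℕ → ZMod (2 * m + 1))
    (h0 : f 0 = j) (hn : f n = j + v) (hw : cycleWalk _ n f) : v.natAbs ≤ n := by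
  obtain ⟨s, s0, s1, s2⟩ := cw_lift _ _ _ hw
  by_contra hlt
  have h1 := lip s s1 0 n
  have h2 := s2 n le_rfl
  rw [h0, hn] at h2
  have h3 := add_left_cancel h2
  simp only [zero_add, s0, sub_zero] at h1
  have := cast_inj' m v (s n) hv (by omega) h3
  omega

lemma dist_eq (m : ℕ) (j : ZMod (2 * m + 1)) (v : ℤ) (hv : v.natAbs ≤ m) :
    cycleDist _ j (j + v) = v.natAbs := by
  apply le_antisymm
  · apply Nat.sInf_le
    obtain ⟨f, a, b, c, _⟩ := walk_mem _ j v
    exact ⟨f, a, b, c⟩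
  · apply le_csInf
    · obtain ⟨f, a, b, c, _⟩ := walk_mem _ j v
      exact ⟨_, f, a, b, c⟩
    · rintro n ⟨f, a, b, c⟩
      exact lift_le m n j v hv f a b c

lemma shortest (m : ℕ) (j : ZMod (2 * m + 1)) (v : ℤ) (hv : v.natAbs ≤ m) (f : ℕ → ZMod (2 * m + 1))
    (h0 : f 0 = j) (hn : f v.natAbs = j + v) (hw : cycleWalk _ v.natAbs f) (t : ℕ)
    (ht : t ≤ v.natAbs) : f t = j + ((v.sign * t : ℤ) : ZMod (2 * m + 1)) := by
  obtain ⟨s, s0, s1, s2⟩ := cw_lift _ _ _ hw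
  have h1 := lip s s1 0 v.natAbs
  have h2 := s2 _ le_rfl
  rw [h0, hn] at h2
  have h3 := add_left_cancel h2
  simp only [zero_add, s0, sub_zero] at h1
  have h4 := cast_inj' m v _ hv (by omega) h3
  have h5 := lip s s1 0 t
  simp only [zero_add, s0, sub_zero] at h5
  have h6 := lip s s1 t (v.natAbs - t)
  rw [Nat.add_sub_cancel' ht, ← h4] at h6
  rw [s2 t ht, h0]
  congr 2
  rcases lt_trichotomy v 0 with h | h | h
  · rw [Int.sign_eq_neg_one_of_neg h]; omega
  · subst h; simp at ht; subst ht; simp [s0]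
  · rw [Int.sign_eq_one_of_pos h]; omega

def pmap (N : ℕ) (i : ZMod N) (p : ℤ × ℤ) : ZMod N × ZMod N :=
  (i - ((if p.1 < p.2 then p.1 else -p.2 : ℤ) : ZMod N), i + ((p.2 - p.1 : ℤ) : ZMod N))

lemma pmap_inj (m : ℕ) (i : ZMod (2 * m + 1)) :
    Set.InjOn (pmap _ i) ((Finset.Icc (1 : ℤ) m).offDiag : Set (ℤ × ℤ)) := by
  rintro ⟨a, c⟩ h ⟨a', c'⟩ h' e
  simp only [Finset.coe_offDiag, Finset.coe_Icc, Set.mem_offDiag, Set.mem_Icc] at h h'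
  simp only [pmap, Prod.mk.injEq] at e
  have e1 := cast_inj' m _ _ (by split_ifs <;> omega)
    (by split_ifs <;> omega) (sub_right_injective e.1)
  have e2 := cast_inj' m _ _ (by omega) (by omega) (add_left_cancel e.2)
  ext <;> simp only <;> split_ifs at e1 <;> omega

lemma set_eq (m : ℕ) (i : ZMod (2 * m + 1)) :
    {p : ZMod (2 * m + 1) × ZMod (2 * m + 1) | p.1 ≠ p.2 ∧ p.1 ≠ i ∧ p.2 ≠ i ∧
        ∃ f : ℕ → ZMod (2 * m + 1), f 0 = p.1 ∧ f (cycleDist _ p.1 p.2) = p.2 ∧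
          cycleWalk _ (cycleDist _ p.1 p.2) f ∧
          ∃ t : ℕ, 0 < t ∧ t < cycleDist _ p.1 p.2 ∧ f t = i} =
    pmap _ i '' ((Finset.Icc (1 : ℤ) m).offDiag : Set (ℤ × ℤ)) := by
  ext ⟨j, l⟩
  simp only [Set.mem_ofPred_eq, Finset.coe_offDiag, Finset.coe_Icc, Set.mem_image, Set.mem_offDiag,
    Set.mem_Icc, Prod.exists]
  constructor
  · rintro ⟨-, -, -, f, f0, f1, f2, t, t0, t1, ft⟩
    obtain ⟨v, hv, hvl⟩ := exists_rep m (l - j)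
    obtain rfl : l = j + v := by rw [hvl]; ring
    rw [dist_eq m j v hv] at f1 f2 t1
    have := shortest m j v hv f f0 f1 f2 t t1.le
    rw [ft] at this
    rcases lt_trichotomy v 0 with h | h | h
    · rw [Int.sign_eq_neg_one_of_neg h] at this
      refine ⟨-v, t, by omega, ?_⟩
      rw [pmap, if_neg (by simp only; omega), this]
      ext <;> simp
    · subst h; simp at t1
    · rw [Int.sign_eq_one_of_pos h] at this
      refine ⟨t, v, by omega, ?_⟩
      rw [pmap, if_pos (by simp only; omega), this]
      ext <;> simp
  · rintro ⟨a, c, ⟨ha, hc, hac⟩, e⟩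
    have key : ∀ X Y : ℤ, X.natAbs ≤ m → Y.natAbs ≤ m → (X + Y).natAbs ≤ m → (0 < X ∧ 0 < Y ∨ X < 0 ∧ Y < 0) →
        j = i - X → l = i + Y → j ≠ l ∧ j ≠ i ∧ l ≠ i ∧
        ∃ f : ℕ → ZMod (2 * m + 1), f 0 = j ∧ f (cycleDist _ j l) = l ∧
          cycleWalk _ (cycleDist _ j l) f ∧
          ∃ t : ℕ, 0 < t ∧ t < cycleDist _ j l ∧ f t = i := by
      intro X Y hX hY hXY hs hj hl
      have hz : (0 : ℤ).natAbs ≤ m := by simp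
      obtain rfl : l = j + ((X + Y : ℤ) : ZMod (2 * m + 1)) := by rw [hl, hj]; push_cast; ring
      refine ⟨?_, ?_, ?_, ?_⟩
      · intro h
        have := cast_inj' m (X + Y) 0 hXY hz (by
          rw [Int.cast_zero]; exact left_eq_add.mp h)
        omega
      · intro h
        have := cast_inj' m X 0 hX hz (by
          rw [Int.cast_zero]; exact sub_eq_self.mp (hj.symm.trans h))
        omega
      · intro h
        have := cast_inj' m Y 0 hY hz (by
          rw [Int.cast_zero]; exact add_eq_left.mp (hl.symm.trans h))
        omega
      · rw [dist_eq m j _ hXY]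
        obtain ⟨f, f0, f1, f2, f3⟩ := walk_mem _ j (X + Y)
        refine ⟨f, f0, f1, f2, X.natAbs, by omega, by omega, ?_⟩
        have : (X + Y).sign * (X.natAbs : ℤ) = X := by
          rcases hs with h | h
          · rw [Int.sign_eq_one_of_pos (by omega)]; omega
          · rw [Int.sign_eq_neg_one_of_neg (by omega)]; omega
        rw [f3, this, hj]; ring
    simp only [pmap, Prod.mk.injEq] at e
    refine key _ _ ?_ ?_ ?_ ?_ e.1.symm e.2.symm
    · split_ifs <;> omega
    · omega
    · split_ifs <;> omega
    · split_ifs <;> omega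

/-- **Node loading of a ring with an odd number of nodes.**
Let `N ≥ 3` be odd and consider the cycle on `ZMod N`.  (1) Every ordered pair
of distinct vertices has a unique shortest path: any two walks of minimal
length between them coincide.  (2) For any fixed vertex `i`, the number of
ordered pairs `(j, l)` of vertices distinct from each other and from `i` such
that `i` is an interior vertex of the (unique) shortest path from `j` to `l`
equals `(N−1)(N−3)/4`. -/
theorem ring_node_loading_odd (N : ℕ) (hN : 3 ≤ N) (hodd : Odd N)
    (i : ZMod N) :
    (∀ j l : ZMod N, j ≠ l → ∀ f g : ℕ → ZMod N,
      (f 0 = j ∧ f (cycleDist N j l) = l ∧ cycleWalk N (cycleDist N j l) f) →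
      (g 0 = j ∧ g (cycleDist N j l) = l ∧ cycleWalk N (cycleDist N j l) g) →
      ∀ t ≤ cycleDist N j l, f t = g t) ∧
    Nat.card {p : ZMod N × ZMod N // p.1 ≠ p.2 ∧ p.1 ≠ i ∧ p.2 ≠ i ∧
        ∃ f : ℕ → ZMod N, f 0 = p.1 ∧ f (cycleDist N p.1 p.2) = p.2 ∧
          cycleWalk N (cycleDist N p.1 p.2) f ∧
          ∃ t : ℕ, 0 < t ∧ t < cycleDist N p.1 p.2 ∧ f t = i}
      = (N - 1) * (N - 3) / 4 := by
  obtain ⟨m, rfl⟩ := hodd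
  constructor
  · intro j l _ f g hf hg t ht
    obtain ⟨v, hv, hvl⟩ := exists_rep m (l - j)
    obtain rfl : l = j + v := by rw [hvl]; ring
    rw [dist_eq m j v hv] at hf hg ht
    rw [shortest m j v hv f hf.1 hf.2.1 hf.2.2 t ht, shortest m j v hv g hg.1 hg.2.1 hg.2.2 t ht]
  · have h := congrArg Set.ncard (set_eq m i)
    rw [Set.ncard_image_of_injOn (pmap_inj m i), Set.ncard_coe_finset, Finset.offDiag_card] at h
    refine Eq.trans h ?_
    obtain ⟨k, rfl⟩ : ∃ k, m = k + 1 := ⟨m - 1, by omega⟩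
    have e1 : 2 * (k + 1) + 1 - 1 = 2 * (k + 1) := by omega
    have e2 : 2 * (k + 1) + 1 - 3 = 2 * k := by omega
    rw [e1, e2]
    have e3 : 2 * (k + 1) * (2 * k) = 4 * ((k + 1) * k) := by ring
    rw [e3, Nat.mul_div_cancel_left _ (by norm_num)]
    simp only [Int.card_Icc]
    have e4 : (((k + 1 : ℕ) : ℤ) + 1 - 1).toNat = k + 1 := by omega
    rw [e4]
    have e5 : (k + 1) * (k + 1) = (k + 1) * k + (k + 1) := by ring
    omega
end

section
/- Let N ≥ 4 be an even integer, and consider the cycle (ring) on vertex set ZMod N in which j is adjacent to j+1 and j−1. Route each ordered pair (j, l) of distinct vertices along its unique shortest path if their cycle distance is less than N/2, and along the path j, j+1, …, j+N/2 in the positive direction if l = j + N/2 (tie-breaking antipodal pairs in the positive direction). Then for any fixed vertex i, the number of ordered pairs (j, l) with j ≠ l, j ≠ i, l ≠ i such that i is an interior vertex of the route from j to l equals (N−2)²/4. -/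
/-- In the cycle on `ZMod N`, `i` is an interior vertex of the route from `j`
to `l`, where the route follows the unique shortest path when the cycle
distance is less than `N/2`, and goes in the positive direction
`j, j+1, …, j + N/2` for antipodal pairs (tie-breaking in the positive
direction).  Concretely, letting `d = (l − j).val`: if `d ≤ N/2` the route is
`j, j+1, …, j+d` (positive direction), otherwise it is `j, j−1, …, j−(N−d)`
(negative direction); `i` is interior if it is hit strictly between the two
endpoints. -/
def ringRouteInterior (N : ℕ) (j l i : ZMod N) : Prop :=
  if (l - j).val ≤ N / 2 then
    ∃ t : ℕ, 0 < t ∧ t < (l - j).val ∧ i = j + (t : ZMod N)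
  else
    ∃ t : ℕ, 0 < t ∧ t < N - (l - j).val ∧ i = j - (t : ZMod N)

lemma ring_cast_inj (N : ℕ) (u v : ℤ) (h : (u : ZMod N) = (v : ZMod N))
    (h1 : u - v < N) (h2 : v - u < N) : u = v := by
  rw [ZMod.intCast_eq_intCast_iff_dvd_sub] at h
  have := Int.eq_zero_of_abs_lt_dvd h (by rw [abs_lt]; constructor <;> omega)
  omega

/-- Parametrization of the routed pairs. -/
def ringParam (m : ℕ) (i : ZMod (m + m)) (q : ℕ × ℕ) : ZMod (m + m) × ZMod (m + m) :=
  (i + ((if q.1 + q.2 ≤ m then -(q.1 : ℤ) else (m : ℤ) - q.1 : ℤ) : ZMod (m + m)),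
   i + ((if q.1 + q.2 ≤ m then (q.2 : ℤ) else (q.2 : ℤ) - m : ℤ) : ZMod (m + m)))

/-- **Node loading of a ring with an even number of nodes.**
Let `N ≥ 4` be even and consider the cycle on `ZMod N`, with each ordered pair
`(j, l)` of distinct vertices routed along its unique shortest path when their
cycle distance is less than `N/2`, and along the positive-direction path
`j, j+1, …, j + N/2` when `l = j + N/2`.  Then for any fixed vertex `i`, the
number of ordered pairs `(j, l)`, with `j, l, i` pairwise distinct, such that
`i` is an interior vertex of the route from `j` to `l` equals `(N−2)²/4`. -/
theorem ring_node_loading_even (N : ℕ) (hN : 4 ≤ N) (heven : Even N)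
    (i : ZMod N) :
    Nat.card {p : ZMod N × ZMod N // p.1 ≠ p.2 ∧ p.1 ≠ i ∧ p.2 ≠ i ∧
        ringRouteInterior N p.1 p.2 i}
      = (N - 2) ^ 2 / 4 := by
  obtain ⟨m, rfl⟩ := heven
  have hz : ((m : ZMod (m + m)) + m) = 0 := by
    have := ZMod.natCast_self (m + m)
    push_cast at this
    exact this
  have key : {p : ZMod (m + m) × ZMod (m + m) | p.1 ≠ p.2 ∧ p.1 ≠ i ∧ p.2 ≠ i ∧
        ringRouteInterior (m + m) p.1 p.2 i} =
      ((Finset.Icc 1 (m - 1) ×ˢ Finset.Icc 1 (m - 1)).image (ringParam m i) :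
        Finset (ZMod (m + m) × ZMod (m + m))) := by
    ext ⟨j, l⟩
    simp only [Set.mem_setOf_eq, Finset.coe_image, Set.mem_image, Finset.mem_coe,
      Finset.mem_product, Finset.mem_Icc]
    constructor
    · rintro ⟨-, -, -, h⟩
      haveI : NeZero (m + m) := ⟨by omega⟩
      have hl : l = j + ((l - j).val : ZMod (m + m)) := by
        rw [ZMod.natCast_zmod_val]; ring
      unfold ringRouteInterior at h
      have hlt := ZMod.val_lt (l - j)
      generalize (l - j).val = d at *
      split_ifs at h with hd
      · obtain ⟨t, h0, h1, h2⟩ := h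
        obtain ⟨b, rfl⟩ := Nat.exists_eq_add_of_lt h1
        refine ⟨(t, b + 1), ⟨⟨by omega, by omega⟩, by omega, by omega⟩, ?_⟩
        have hc : t + (b + 1) ≤ m := by omega
        subst h2 hl
        simp only [ringParam, if_pos hc, Prod.mk.injEq]
        constructor <;> push_cast <;> ring
      · obtain ⟨t, h0, h1, h2⟩ := h
        obtain ⟨a, ha⟩ : ∃ a, m = a + t := ⟨m - t, by omega⟩
        obtain ⟨b, hb⟩ : ∃ b, d = a + b := ⟨d - a, by omega⟩
        refine ⟨(a, b), ⟨⟨by omega, by omega⟩, by omega, by omega⟩, ?_⟩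
        have hc : ¬ (a + b ≤ m) := by omega
        have hm : (m : ZMod (m + m)) = a + t := by
          conv_lhs => rw [show (m : ZMod (m + m)) = ((m : ℕ) : ZMod (m + m)) from rfl]
          exact_mod_cast congrArg (Nat.cast : ℕ → ZMod (m + m)) ha
        have hd' : (d : ZMod (m + m)) = a + b := by
          exact_mod_cast congrArg (Nat.cast : ℕ → ZMod (m + m)) hb
        simp only [ringParam, if_neg hc, Prod.mk.injEq]
        push_cast
        constructor
        · linear_combination h2 + hm
        · linear_combination h2 - hl + hm - hd' - hz
    · rintro ⟨⟨a, b⟩, ⟨⟨ha1, ha2⟩, hb1, hb2⟩, h⟩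
      simp only at ha1 ha2 hb1 hb2
      have hval : (l - j).val = a + b := by
        have : l - j = ((a + b : ℕ) : ZMod (m + m)) := by
          simp only [ringParam, Prod.mk.injEq] at h
          obtain ⟨rfl, rfl⟩ := h
          split_ifs
          · push_cast; ring
          · push_cast; linear_combination -hz
        rw [this, ZMod.val_natCast, Nat.mod_eq_of_lt (by omega)]
      have hne : ∀ u : ℤ, u ≠ 0 → u < m + m → -u < m + m → (u : ZMod (m + m)) ≠ 0 := by
        intro u hu h1 h2 h3
        exact hu (ring_cast_inj (m + m) u 0 (by simpa using h3)
          (by push_cast; omega) (by push_cast; omega))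
      refine ⟨?_, ?_, ?_, ?_⟩
      · rintro rfl
        simp at hval
        omega
      · simp only [ringParam, Prod.mk.injEq] at h
        rw [← h.1, Ne, add_eq_left]
        apply hne <;> split_ifs <;> omega
      · simp only [ringParam, Prod.mk.injEq] at h
        rw [← h.2, Ne, add_eq_left]
        apply hne <;> split_ifs <;> omega
      · unfold ringRouteInterior
        rw [hval]
        simp only [ringParam, Prod.mk.injEq] at h
        obtain ⟨h, -⟩ := h
        by_cases hc : a + b ≤ m
        · rw [if_pos (by omega)]
          rw [if_pos hc] at h
          refine ⟨a, by omega, by omega, ?_⟩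
          rw [← h]; push_cast; ring
        · rw [if_neg (by omega)]
          rw [if_neg hc] at h
          refine ⟨m - a, by omega, by omega, ?_⟩
          rw [← h, Nat.cast_sub (by omega)]; push_cast; ring
  have hcard : Nat.card {p : ZMod (m + m) × ZMod (m + m) // p.1 ≠ p.2 ∧ p.1 ≠ i ∧ p.2 ≠ i ∧
        ringRouteInterior (m + m) p.1 p.2 i} = (m - 1) * (m - 1) := by
    change Nat.card ({p : ZMod (m + m) × ZMod (m + m) | p.1 ≠ p.2 ∧ p.1 ≠ i ∧ p.2 ≠ i ∧
        ringRouteInterior (m + m) p.1 p.2 i} : Set _) = _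
    rw [Nat.card_coe_set_eq, key, Set.ncard_coe_finset, Finset.card_image_of_injOn]
    · simp
    · rintro ⟨a, b⟩ hab ⟨a', b'⟩ hab' h
      simp only [Finset.mem_coe, Finset.mem_product, Finset.mem_Icc] at hab hab'
      simp only [ringParam, Prod.mk.injEq, add_right_inj] at h
      obtain ⟨h1, h2⟩ := h
      have e1 := ring_cast_inj _ _ _ h1 (by push_cast; split_ifs <;> omega)
        (by push_cast; split_ifs <;> omega)
      have e2 := ring_cast_inj _ _ _ h2 (by push_cast; split_ifs <;> omega)
        (by push_cast; split_ifs <;> omega)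
      simp only [Prod.mk.injEq]
      split_ifs at e1 e2 <;> omega
  rw [hcard]
  obtain ⟨k, rfl⟩ : ∃ k, m = k + 1 := ⟨m - 1, by omega⟩
  rw [show k + 1 + (k + 1) - 2 = 2 * k by omega, show k + 1 - 1 = k by omega,
    show (2 * k) ^ 2 = 4 * (k * k) by ring]
  omega
end

section
/- Consider the vertex set of all strings of length D over an alphabet of size Δ (functions Fin D → Fin Δ), with Δ ≥ 2 and D ≥ 1, and the digit-correcting route from i to j defined as follows: starting at i, repeatedly replace, at the leftmost position where the current string differs from j, the current digit by the corresponding digit of j, until reaching j (the route visits dist_H(i,j) + 1 strings, where dist_H is Hamming distance). Then for every fixed vertex k, the number of ordered pairs (i, j) such that k appears on the route from i to j with k ≠ i and k ≠ j equals Δ^{D−1}·(D·(Δ−1) − Δ) + 1. -/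
/-- `k` lies on the digit-correcting (prefix-correcting) route from `i` to
`j`: starting at `i`, digits are corrected to those of `j` one at a time in
increasing order of position, so the nodes visited are exactly the strings
that agree with `j` on an initial segment of positions and with `i` on the
remaining positions. -/
def onDigitRoute {Δ D : ℕ} (i j k : Fin D → Fin Δ) : Prop :=
  ∃ P : ℕ, (∀ t : Fin D, t.val < P → k t = j t) ∧
    (∀ t : Fin D, P ≤ t.val → k t = i t)

theorem route_zero {Δ D : ℕ} (i j k : Fin (D+1) → Fin Δ) :
    onDigitRoute i j k ↔ (j 0 = k 0 ∧ onDigitRoute (Fin.tail i) (Fin.tail j) (Fin.tail k)) ∨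
      (j 0 ≠ k 0 ∧ i = k) := by
  constructor
  · rintro ⟨P, h1, h2⟩
    rcases P with _ | P
    · have : i = k := by
        funext t
        exact (h2 t (Nat.zero_le _)).symm
      by_cases h : j 0 = k 0
      · exact Or.inl ⟨h, 0, fun t ht => absurd ht (Nat.not_lt_zero _), fun t _ => by rw [this]⟩
      · exact Or.inr ⟨h, this⟩
    · refine Or.inl ⟨(h1 0 (by simp)).symm, P, fun t ht => h1 t.succ (by simpa using ht),
        fun t ht => h2 t.succ (by simpa using ht)⟩
  · rintro (⟨h, P, h1, h2⟩ | ⟨_, h⟩)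
    · refine ⟨P + 1, fun t => ?_, fun t => ?_⟩
      · refine Fin.cases (fun _ => h.symm) (fun t ht => h1 t (by simpa using ht)) t
      · refine Fin.cases (fun h => by simp at h) (fun t ht => h2 t (by simpa using ht)) t
    · exact ⟨0, fun t ht => absurd ht (Nat.not_lt_zero _), fun t _ => by rw [h]⟩

open Classical in
theorem route_count (Δ : ℕ) : ∀ (D : ℕ) (k : Fin D → Fin Δ),
    (Δ : ℤ) * ((Finset.univ : Finset ((Fin D → Fin Δ) × (Fin D → Fin Δ))).filter
      (fun p => onDigitRoute p.1 p.2 k)).card = (Δ : ℤ) ^ D * (D * ((Δ : ℤ) - 1) + Δ) := by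
  intro D
  induction D with
  | zero =>
    intro k
    have : (Finset.univ : Finset ((Fin 0 → Fin Δ) × (Fin 0 → Fin Δ))).filter
      (fun p => onDigitRoute p.1 p.2 k) = Finset.univ := by
      apply Finset.filter_true_of_mem
      intro p _
      exact ⟨0, fun t => t.elim0, fun t => t.elim0⟩
    rw [this]; simp
  | succ D ih =>
    intro k
    have e : (Finset.univ : Finset ((Fin (D+1) → Fin Δ) × (Fin (D+1) → Fin Δ))).filter
        (fun p => onDigitRoute p.1 p.2 k) =
        ((Finset.univ : Finset (Fin Δ)) ×ˢ
          ((Finset.univ : Finset ((Fin D → Fin Δ) × (Fin D → Fin Δ))).filter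
            (fun p => onDigitRoute p.1 p.2 (Fin.tail k)))).image
          (fun q => ((Fin.cons q.1 q.2.1 : Fin (D+1) → Fin Δ),
            (Fin.cons (k 0) q.2.2 : Fin (D+1) → Fin Δ))) ∪
        (((Finset.univ : Finset (Fin Δ)).erase (k 0)) ×ˢ
          (Finset.univ : Finset (Fin D → Fin Δ))).image
          (fun q => (k, (Fin.cons q.1 q.2 : Fin (D+1) → Fin Δ))) := by
      ext ⟨i, j⟩
      simp only [Finset.mem_filter, Finset.mem_univ, true_and, Finset.mem_union,
        Finset.mem_image, Finset.mem_product, Finset.mem_erase, and_true, Prod.mk.injEq,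
        Prod.exists, route_zero]
      constructor
      · rintro (⟨h, hr⟩ | ⟨h, hr⟩)
        · exact Or.inl ⟨i 0, Fin.tail i, Fin.tail j, hr, Fin.cons_self_tail i, by
            rw [← h]; exact Fin.cons_self_tail j⟩
        · exact Or.inr ⟨j 0, Fin.tail j, h, hr.symm, Fin.cons_self_tail j⟩
      · rintro (⟨x, i', j', hr, rfl, rfl⟩ | ⟨y, j', h, rfl, rfl⟩)
        · left; simpa using hr
        · right; simpa using h
    rw [e, Finset.card_union_of_disjoint, Finset.card_image_of_injective,
      Finset.card_image_of_injective, Finset.card_product, Finset.card_product,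
      Finset.card_erase_of_mem (Finset.mem_univ _)]
    · have h1 : 1 ≤ Δ := (k 0).pos
      have := ih (Fin.tail k)
      simp only [Finset.card_univ, Fintype.card_fin, Fintype.card_fun]
      push_cast [Nat.cast_sub h1]
      rw [mul_add, this]
      ring
    · rintro ⟨x, j⟩ ⟨x', j'⟩ h
      simp only [Prod.mk.injEq, true_and, Fin.cons_inj] at h
      simp [h]
    · rintro ⟨x, i, j⟩ ⟨x', i', j'⟩ h
      simp only [Prod.mk.injEq, true_and, Fin.cons_inj] at h
      simp [h]
    · rw [Finset.disjoint_left]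
      rintro ⟨i, j⟩ h h'
      simp only [Finset.mem_filter, Finset.mem_univ, true_and,
        Finset.mem_image, Finset.mem_product, Finset.mem_erase, and_true, Prod.mk.injEq,
        Prod.exists] at h h'
      obtain ⟨x, i', j', hr, h1, rfl⟩ := h
      obtain ⟨y, j'', hy, h2, h3⟩ := h'
      rw [Fin.cons_inj] at h3
      exact hy h3.1

/-- **Routing load under prefix-correcting (Plaxton-tree) routing.**
On the fully populated identifier space of strings of length `D ≥ 1` over an
alphabet of size `Δ ≥ 2`, route each ordered pair `(i, j)` by correcting one
digit at a time in increasing position order.  Then for every fixed vertex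
`k`, the number of ordered pairs `(i, j)` such that `k` appears on the route
from `i` to `j` with `k ≠ i` and `k ≠ j` equals
`Δ^{D−1}·(D·(Δ−1) − Δ) + 1`. -/
theorem plaxton_routing_load (Δ D : ℕ) (hΔ : 2 ≤ Δ) (hD : 1 ≤ D)
    (k : Fin D → Fin Δ) :
    (Nat.card {p : (Fin D → Fin Δ) × (Fin D → Fin Δ) //
        onDigitRoute p.1 p.2 k ∧ k ≠ p.1 ∧ k ≠ p.2} : ℤ)
      = (Δ : ℤ) ^ (D - 1) * ((D : ℤ) * ((Δ : ℤ) - 1) - (Δ : ℤ)) + 1 := by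
  classical
  rw [Nat.card_eq_fintype_card, Fintype.card_subtype]
  have hc := route_count Δ D k
  have e : (Finset.univ : Finset ((Fin D → Fin Δ) × (Fin D → Fin Δ))).filter
      (fun p => onDigitRoute p.1 p.2 k) =
      (Finset.univ : Finset ((Fin D → Fin Δ) × (Fin D → Fin Δ))).filter
      (fun p => onDigitRoute p.1 p.2 k ∧ k ≠ p.1 ∧ k ≠ p.2) ∪
      (({k} ×ˢ Finset.univ) ∪ (Finset.univ ×ˢ {k})) := by
    ext ⟨i, j⟩
    have h1 : i = k → onDigitRoute i j k := by
      rintro rfl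
      exact ⟨0, fun t ht => absurd ht (Nat.not_lt_zero _), fun t _ => rfl⟩
    have h2 : j = k → onDigitRoute i j k := by
      rintro rfl
      exact ⟨D, fun t _ => rfl, fun t ht => absurd t.isLt (not_lt.mpr ht)⟩
    simp only [Finset.mem_filter, Finset.mem_univ, true_and, Finset.mem_union,
      Finset.mem_product, Finset.mem_singleton, and_true, ne_eq, eq_comm (a := k)]
    tauto
  have hu := Finset.card_union_add_card_inter
    (({k} : Finset (Fin D → Fin Δ)) ×ˢ (Finset.univ : Finset (Fin D → Fin Δ)))
    ((Finset.univ : Finset (Fin D → Fin Δ)) ×ˢ ({k} : Finset (Fin D → Fin Δ)))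
  have hi : (({k} : Finset (Fin D → Fin Δ)) ×ˢ (Finset.univ : Finset (Fin D → Fin Δ))) ∩
    ((Finset.univ : Finset (Fin D → Fin Δ)) ×ˢ ({k} : Finset (Fin D → Fin Δ))) = {(k, k)} := by
    ext ⟨i, j⟩
    simp [eq_comm]
  rw [hi] at hu
  simp only [Finset.card_product, Finset.card_singleton, Finset.card_univ, Fintype.card_fun,
    Fintype.card_fin, one_mul, mul_one] at hu
  rw [e, Finset.card_union_of_disjoint] at hc
  · obtain ⟨n, rfl⟩ : ∃ n, D = n + 1 := ⟨D - 1, by omega⟩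
    have hu' := congrArg (Nat.cast : ℕ → ℤ) hu
    push_cast at hu' hc ⊢
    have h0 : (Δ : ℤ) ≠ 0 := by
      have : Δ ≠ 0 := by omega
      exact_mod_cast this
    apply mul_left_cancel₀ h0
    linear_combination hc - (Δ : ℤ) * hu'
  · rw [Finset.disjoint_left]
    rintro ⟨i, j⟩ h h'
    simp only [Finset.mem_filter, Finset.mem_univ, true_and, Finset.mem_union,
      Finset.mem_product, Finset.mem_singleton, and_true, ne_eq, eq_comm (a := k)] at h h'
    tauto
end
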